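/- arXiv:2109.07137 — 8 statements merged into one kernel-verified Lean document; each statement's English description precedes it below -/
import Mathlib

section
/- For every occupancy vector b (0 ≤ b i ≤ B i for all i), every ramp limit vector c with c i ≥ 0, and every net generation e ∈ ℤ, the feasible action set is nonempty: there exists a : Fin N → ℤ with |a i| ≤ c i and 0 ≤ b i + a i ≤ B i for all i, and ∑ i, a i = clamp e (m b) (M b). -/
/-!
The constraints on `a i` say exactly that `a i` lies in the integer interval
`[-min (b i) (c i), min (B i - b i) (c i)]`, which contains `0`. So the admissible actions form an
integer box whose extreme corners have sums `m b ≤ M b`, and the coordinate sum takes every integer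
value between these (`exists_sum_eq_of_box`), in particular the clamped value of `e`.
-/

/-- `clamp y m M` projects `y` onto the interval `[m, M]`. -/
def clamp (y m M : ℤ) : ℤ := min (max y m) M

/-- Discrete intermediate value property: the coordinate sum maps an integer box onto the whole
interval between the sums of its two extreme corners. -/
theorem exists_sum_eq_of_box (n : ℕ) (l u : Fin n → ℤ) (h : ∀ i, l i ≤ u i) (y : ℤ)
    (hl : ∑ i, l i ≤ y) (hu : y ≤ ∑ i, u i) :
    ∃ a : Fin n → ℤ, (∀ i, l i ≤ a i ∧ a i ≤ u i) ∧ ∑ i, a i = y := by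
  induction n generalizing y with
  | zero => exact ⟨l, fun i => i.elim0, by simp at *; omega⟩
  | succ n ih =>
    rw [Fin.sum_univ_succ] at hl hu
    have h0 := h 0
    have hs : ∑ i : Fin n, l i.succ ≤ ∑ i : Fin n, u i.succ :=
      Finset.sum_le_sum fun i _ => h i.succ
    -- Fill the first coordinate as far as the lower bounds of the remaining ones permit.
    obtain ⟨x, hx⟩ : ∃ x, x = min (u 0) (y - ∑ i : Fin n, l i.succ) := ⟨_, rfl⟩
    obtain ⟨a, ha, hsum⟩ := ih (fun i => l i.succ) (fun i => u i.succ) (fun i => h i.succ)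
      (y - x) (by omega) (by omega)
    refine ⟨Fin.cons x a, fun i => ?_, ?_⟩
    · refine Fin.cases ?_ (fun j => ?_) i
      · simp only [Fin.cons_zero]
        omega
      · simpa only [Fin.cons_succ] using ha j
    · rw [Fin.sum_univ_succ]
      simp only [Fin.cons_zero, Fin.cons_succ]
      omega

/-- Nonemptiness of the feasible action set of the battery-bank MDP. -/
theorem feasible_action_set_nonempty (N : ℕ) (B : Fin N → ℤ) (hB : ∀ i, 0 ≤ B i)
    (b : Fin N → ℤ) (hb : ∀ i, 0 ≤ b i ∧ b i ≤ B i)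
    (c : Fin N → ℤ) (hc : ∀ i, 0 ≤ c i) (e : ℤ) :
    ∃ a : Fin N → ℤ,
      (∀ i, |a i| ≤ c i) ∧ (∀ i, 0 ≤ b i + a i ∧ b i + a i ≤ B i) ∧
      ∑ i, a i = clamp e (-∑ i, min (b i) (c i)) (∑ i, min (B i - b i) (c i)) := by
  have hle : -∑ i, min (b i) (c i) ≤ ∑ i, min (B i - b i) (c i) := by
    rw [← Finset.sum_neg_distrib]
    refine Finset.sum_le_sum fun i _ => ?_
    have := hb i
    have := hc i
    omega
  obtain ⟨a, ha, hsum⟩ := exists_sum_eq_of_box N (fun i => -min (b i) (c i))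
    (fun i => min (B i - b i) (c i))
    (fun i => by
      have := hb i
      have := hc i
      omega)
    (clamp e (-∑ i, min (b i) (c i)) (∑ i, min (B i - b i) (c i)))
    (by
      rw [Finset.sum_neg_distrib]
      exact le_min (le_max_right _ _) hle)
    (min_le_right _ _)
  refine ⟨a, fun i => ?_, fun i => ?_, hsum⟩
  · have := ha i
    rw [abs_le]
    omega
  · have := ha i
    omega
end

section
/- Reachable occupancies without ramp constraints: if c i ≥ B i for all i, then for every occupancy vector b and net generation e ∈ ℤ, the set of post-action occupancy vectors { b + a : a feasible at b } equals { v : Fin N → ℤ | (∀ i, 0 ≤ v i ≤ B i) ∧ ∑ i, v i = clamp ((∑ i, b i) + e) 0 (∑ i, B i) }. Consequently this set depends on b only through the total ∑ i, b i: if ∑ i, b i = ∑ i, b' i for two occupancy vectors b, b', then their sets of reachable post-action occupancies coincide. -/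
/-- An action `a` is feasible at occupancy `b` for net generation `e`
(batteries with capacities `B`, ramp limits `c`). -/
def Feasible (N : ℕ) (B c : Fin N → ℤ) (e : ℤ) (b a : Fin N → ℤ) : Prop :=
  (∀ i, |a i| ≤ c i) ∧ (∀ i, 0 ≤ b i + a i ∧ b i + a i ≤ B i) ∧
    ∑ i, a i = clamp e (-∑ i, min (b i) (c i)) (∑ i, min (B i - b i) (c i))

/-- For a single occupancy vector, the reachable set is cut out by the capacities and the total. -/
theorem reachable_eq (N : ℕ) (B c : Fin N → ℤ) (hcB : ∀ i, B i ≤ c i) (e : ℤ)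
    (b : Fin N → ℤ) (hb : ∀ i, 0 ≤ b i ∧ b i ≤ B i) :
    {v : Fin N → ℤ | ∃ a : Fin N → ℤ, Feasible N B c e b a ∧ v = b + a} =
    {v : Fin N → ℤ | (∀ i, 0 ≤ v i ∧ v i ≤ B i) ∧
      ∑ i, v i = clamp ((∑ i, b i) + e) 0 (∑ i, B i)} := by
  have h1 : ∑ i, min (b i) (c i) = ∑ i, b i :=
    Finset.sum_congr rfl fun i _ => min_eq_left ((hb i).2.trans (hcB i))
  have h2 : ∑ i, min (B i - b i) (c i) = ∑ i, B i - ∑ i, b i := by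
    rw [← Finset.sum_sub_distrib]
    refine Finset.sum_congr rfl fun i _ => min_eq_left ?_
    have := hb i
    have := hcB i
    omega
  ext v
  simp only [Set.mem_ofPred_eq, Feasible, h1, h2, clamp]
  constructor
  · rintro ⟨a, ⟨-, hbox, hsum⟩, rfl⟩
    refine ⟨hbox, ?_⟩
    simp only [Pi.add_apply, Finset.sum_add_distrib]
    omega
  · rintro ⟨hbox, hsum⟩
    refine ⟨v - b, ⟨fun i => ?_, fun i => ?_, ?_⟩, (add_sub_cancel b v).symm⟩
    · have := hb i
      have := hbox i
      have := hcB i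
      rw [Pi.sub_apply, abs_le]
      omega
    · simpa using hbox i
    · simp only [Pi.sub_apply, Finset.sum_sub_distrib]
      omega

/-- Reachable occupancies without ramp constraints: the set of post-action
occupancy vectors is exactly the set of occupancy vectors whose total equals the
clamped updated total; in particular it depends on `b` only through `∑ i, b i`. -/
theorem reachable_occupancies_no_ramp (N : ℕ) (B : Fin N → ℤ) (hB : ∀ i, 0 ≤ B i)
    (c : Fin N → ℤ) (hc : ∀ i, 0 ≤ c i) (hcB : ∀ i, B i ≤ c i) (e : ℤ) :
    (∀ b : Fin N → ℤ, (∀ i, 0 ≤ b i ∧ b i ≤ B i) →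
      {v : Fin N → ℤ | ∃ a : Fin N → ℤ, Feasible N B c e b a ∧ v = b + a} =
      {v : Fin N → ℤ | (∀ i, 0 ≤ v i ∧ v i ≤ B i) ∧
        ∑ i, v i = clamp ((∑ i, b i) + e) 0 (∑ i, B i)}) ∧
    (∀ b b' : Fin N → ℤ, (∀ i, 0 ≤ b i ∧ b i ≤ B i) → (∀ i, 0 ≤ b' i ∧ b' i ≤ B i) →
      ∑ i, b i = ∑ i, b' i →
      {v : Fin N → ℤ | ∃ a : Fin N → ℤ, Feasible N B c e b a ∧ v = b + a} =
      {v : Fin N → ℤ | ∃ a : Fin N → ℤ, Feasible N B c e b' a ∧ v = b' + a}) := by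
  refine ⟨fun b hb => reachable_eq N B c hcB e b hb, fun b b' hb hb' h => ?_⟩
  rw [reachable_eq N B c hcB e b hb, reachable_eq N B c hcB e b' hb', h]
end

section
/- The maximal instantaneous reward depends only on the total stored energy when ramp constraints are never binding: if c i ≥ B i for all i and b, b' are occupancy vectors with ∑ i, b i = ∑ i, b' i, then for every net generation e ∈ ℤ, sSup { R b a : a feasible at b } = sSup { R b' a : a feasible at b' }, and both suprema are attained (the sets of attained rewards are finite and nonempty). -/
/-- The cycling-cost reward of action `a` at occupancy `b`. -/
noncomputable def Rwd (N : ℕ) (r : Fin N → ℝ) (θlo θhi : Fin N → ℤ)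
    (b a : Fin N → ℤ) : ℝ :=
  -∑ i, r i * (max (((θlo i - (b i + a i) : ℤ) : ℝ)) 0 +
               max ((((b i + a i) - θhi i : ℤ) : ℝ)) 0)

/-- The occupancy vectors with total energy `T`. -/
def occupanciesOfTotal (N : ℕ) (B : Fin N → ℤ) (T : ℤ) : Set (Fin N → ℤ) :=
  {p | (∀ i, 0 ≤ p i ∧ p i ≤ B i) ∧ ∑ i, p i = T}

/-- Every integer between `0` and `∑ i ∈ s, B i` is the partial sum over `s` of an integer point
of the box `[0, B]`: fill the indices greedily. -/
theorem exists_box_sum_eq {ι : Type*} [DecidableEq ι] (B : ι → ℤ) (hB : ∀ i, 0 ≤ B i)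
    (s : Finset ι) (T : ℤ) (h0 : 0 ≤ T) (hT : T ≤ ∑ i ∈ s, B i) :
    ∃ p : ι → ℤ, (∀ i, 0 ≤ p i ∧ p i ≤ B i) ∧ ∑ i ∈ s, p i = T := by
  induction s using Finset.induction_on generalizing T with
  | empty =>
    refine ⟨fun _ => 0, fun i => ⟨le_rfl, hB i⟩, ?_⟩
    simp only [Finset.sum_empty] at hT ⊢
    omega
  | insert j s hj ih =>
    rw [Finset.sum_insert hj] at hT
    have hs : 0 ≤ ∑ i ∈ s, B i := Finset.sum_nonneg fun i _ => hB i
    have hBj := hB j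
    -- Store as much as possible in `s`; the remainder fits in `j`.
    obtain ⟨p, hp, hpT⟩ := ih (min T (∑ i ∈ s, B i)) (le_min h0 hs) (min_le_right _ _)
    refine ⟨Function.update p j (T - min T (∑ i ∈ s, B i)), fun i => ?_, ?_⟩
    · by_cases hij : i = j
      · subst hij
        rw [Function.update_self]
        omega
      · rw [Function.update_of_ne hij]
        exact hp i
    · rw [Finset.sum_insert hj, Function.update_self, Finset.sum_update_of_notMem hj, hpT]
      omega

theorem occupanciesOfTotal_finite (N : ℕ) (B : Fin N → ℤ) (T : ℤ) :
    (occupanciesOfTotal N B T).Finite :=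
  (Set.finite_Icc (0 : Fin N → ℤ) B).subset fun _ hp =>
    ⟨fun i => (hp.1 i).1, fun i => (hp.1 i).2⟩

/-- Change of variables `p = b + a`: without binding ramp limits, feasibility only constrains the
final occupancy. -/
theorem feasible_iff (N : ℕ) (B c : Fin N → ℤ) (hcB : ∀ i, B i ≤ c i) (b : Fin N → ℤ)
    (hb : ∀ i, 0 ≤ b i ∧ b i ≤ B i) (e : ℤ) (a : Fin N → ℤ) :
    Feasible N B c e b a ↔
      b + a ∈ occupanciesOfTotal N B (clamp (e + ∑ i, b i) 0 (∑ i, B i)) := by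
  have h1 : ∑ i, min (b i) (c i) = ∑ i, b i :=
    Finset.sum_congr rfl fun i _ => min_eq_left ((hb i).2.trans (hcB i))
  have h2 : ∑ i, min (B i - b i) (c i) = ∑ i, B i - ∑ i, b i := by
    rw [← Finset.sum_sub_distrib]
    refine Finset.sum_congr rfl fun i _ => min_eq_left ?_
    have := hb i
    have := hcB i
    omega
  simp only [Feasible, occupanciesOfTotal, clamp, Set.mem_ofPred_eq, Pi.add_apply,
    Finset.sum_add_distrib, h1, h2]
  constructor
  · rintro ⟨-, hbox, hs⟩
    exact ⟨hbox, by omega⟩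
  · rintro ⟨hbox, hs⟩
    refine ⟨fun i => ?_, hbox, by omega⟩
    have := hb i
    have := hcB i
    have := hbox i
    rw [abs_le]
    omega

/-- Since `Rwd` depends on `b` and `a` only through `b + a`, the reward of reaching `p` can be
written as the reward of the null action at `p`. -/
theorem rewards_eq_image (N : ℕ) (B c : Fin N → ℤ) (hcB : ∀ i, B i ≤ c i) (r : Fin N → ℝ)
    (θlo θhi b : Fin N → ℤ) (hb : ∀ i, 0 ≤ b i ∧ b i ≤ B i) (e : ℤ) :
    {x : ℝ | ∃ a : Fin N → ℤ, Feasible N B c e b a ∧ x = Rwd N r θlo θhi b a} =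
      (fun p => Rwd N r θlo θhi p 0) ''
        occupanciesOfTotal N B (clamp (e + ∑ i, b i) 0 (∑ i, B i)) := by
  have hR : ∀ a, Rwd N r θlo θhi b a = Rwd N r θlo θhi (b + a) 0 := fun a => by
    simp only [Rwd, Pi.add_apply, Pi.zero_apply, add_zero]
  ext x
  constructor
  · rintro ⟨a, ha, rfl⟩
    exact ⟨b + a, (feasible_iff N B c hcB b hb e a).1 ha, (hR a).symm⟩
  · rintro ⟨p, hp, rfl⟩
    have hbp : b + (p - b) = p := add_sub_cancel b p
    refine ⟨p - b, (feasible_iff N B c hcB b hb e _).2 (by rwa [hbp]), ?_⟩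
    rw [hR, hbp]

/-- With no binding ramp constraints, the maximal instantaneous reward depends
on the occupancy vector only through the total stored energy; moreover the
suprema are attained (the sets of attained rewards are finite and nonempty). -/
theorem max_reward_depends_only_on_total (N : ℕ) (B : Fin N → ℤ) (hB : ∀ i, 0 ≤ B i)
    (c : Fin N → ℤ) (hc : ∀ i, 0 ≤ c i) (hcB : ∀ i, B i ≤ c i)
    (r : Fin N → ℝ) (hr : ∀ i, 0 ≤ r i)
    (θlo θhi : Fin N → ℤ)
    (hθ : ∀ i, 0 ≤ θlo i ∧ θlo i ≤ θhi i ∧ θhi i ≤ B i)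
    (b b' : Fin N → ℤ) (hb : ∀ i, 0 ≤ b i ∧ b i ≤ B i)
    (hb' : ∀ i, 0 ≤ b' i ∧ b' i ≤ B i)
    (hsum : ∑ i, b i = ∑ i, b' i) (e : ℤ) :
    ({x : ℝ | ∃ a : Fin N → ℤ, Feasible N B c e b a ∧ x = Rwd N r θlo θhi b a}.Finite ∧
     {x : ℝ | ∃ a : Fin N → ℤ, Feasible N B c e b a ∧ x = Rwd N r θlo θhi b a}.Nonempty ∧
     {x : ℝ | ∃ a : Fin N → ℤ, Feasible N B c e b' a ∧ x = Rwd N r θlo θhi b' a}.Finite ∧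
     {x : ℝ | ∃ a : Fin N → ℤ, Feasible N B c e b' a ∧ x = Rwd N r θlo θhi b' a}.Nonempty) ∧
    sSup {x : ℝ | ∃ a : Fin N → ℤ, Feasible N B c e b a ∧ x = Rwd N r θlo θhi b a} =
      sSup {x : ℝ | ∃ a : Fin N → ℤ, Feasible N B c e b' a ∧ x = Rwd N r θlo θhi b' a} ∧
    sSup {x : ℝ | ∃ a : Fin N → ℤ, Feasible N B c e b a ∧ x = Rwd N r θlo θhi b a} ∈
      {x : ℝ | ∃ a : Fin N → ℤ, Feasible N B c e b a ∧ x = Rwd N r θlo θhi b a} ∧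
    sSup {x : ℝ | ∃ a : Fin N → ℤ, Feasible N B c e b' a ∧ x = Rwd N r θlo θhi b' a} ∈
      {x : ℝ | ∃ a : Fin N → ℤ, Feasible N B c e b' a ∧ x = Rwd N r θlo θhi b' a} := by
  rw [rewards_eq_image N B c hcB r θlo θhi b hb e, rewards_eq_image N B c hcB r θlo θhi b' hb' e,
    ← hsum]
  have hfin := (occupanciesOfTotal_finite N B (clamp (e + ∑ i, b i) 0 (∑ i, B i))).image
    (fun p => Rwd N r θlo θhi p 0)
  have hne : (occupanciesOfTotal N B (clamp (e + ∑ i, b i) 0 (∑ i, B i))).Nonempty := by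
    have hs : 0 ≤ ∑ i, B i := Finset.sum_nonneg fun i _ => hB i
    exact exists_box_sum_eq B hB Finset.univ _ (le_min (le_max_right _ _) hs) (min_le_right _ _)
  have hne' := hne.image (fun p => Rwd N r θlo θhi p 0)
  have hmem := hne'.csSup_mem hfin
  exact ⟨⟨hfin, hne', hfin, hne'⟩, rfl, hmem, hmem⟩
end

section
/- Zero-penalty achievability: suppose c i ≥ B i for all i, let b be an occupancy vector, e ∈ ℤ, and let T = clamp ((∑ i, b i) + e) 0 (∑ i, B i). If ∑ i, θlo i ≤ T ≤ ∑ i, θhi i, then there exists a feasible action a at b with R b a = 0; since R b a' ≤ 0 for every feasible action a', this action maximizes the instantaneous reward. -/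
/-- Discrete intermediate value property: every integer between `∑ l i` and `∑ u i` is the
coordinate sum of some integer point of the box `∏ [l i, u i]`. -/
theorem exists_mem_box_sum_eq {ι : Type*} (s : Finset ι) (l u : ι → ℤ) (hlu : ∀ i, l i ≤ u i)
    (T : ℤ) (h₁ : ∑ i ∈ s, l i ≤ T) (h₂ : T ≤ ∑ i ∈ s, u i) :
    ∃ x : ι → ℤ, (∀ i, l i ≤ x i ∧ x i ≤ u i) ∧ ∑ i ∈ s, x i = T := by
  classical
  induction s using Finset.induction_on generalizing T with
  | empty =>
    refine ⟨l, fun i => ⟨le_rfl, hlu i⟩, ?_⟩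
    simp only [Finset.sum_empty] at *
    omega
  | insert j s hj ih =>
    rw [Finset.sum_insert hj] at h₁ h₂
    have hs : ∑ i ∈ s, l i ≤ ∑ i ∈ s, u i := Finset.sum_le_sum fun i _ => hlu i
    have hjlu := hlu j
    -- Greedy choice: fill coordinate `j` as far as the lower bounds of the others permit.
    obtain ⟨y, hy⟩ : ∃ y, y = min (u j) (T - ∑ i ∈ s, l i) := ⟨_, rfl⟩
    obtain ⟨x, hx, hsum⟩ := ih (T - y) (by omega) (by omega)
    refine ⟨Function.update x j y, fun i => ?_, ?_⟩
    · by_cases hij : i = j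
      · subst hij
        rw [Function.update_self]
        omega
      · rw [Function.update_of_ne hij]
        exact hx i
    · rw [Finset.sum_insert hj, Function.update_self, Finset.sum_update_of_notMem hj, hsum]
      ring

/-- Zero-penalty achievability: if the clamped updated total lies between the
sums of the lower and upper thresholds, some feasible action incurs zero
penalty; and every feasible action has nonpositive reward. -/
theorem zero_penalty_achievable (N : ℕ) (B : Fin N → ℤ) (hB : ∀ i, 0 ≤ B i)
    (c : Fin N → ℤ) (hc : ∀ i, 0 ≤ c i) (hcB : ∀ i, B i ≤ c i)
    (r : Fin N → ℝ) (hr : ∀ i, 0 ≤ r i)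
    (θlo θhi : Fin N → ℤ)
    (hθ : ∀ i, 0 ≤ θlo i ∧ θlo i ≤ θhi i ∧ θhi i ≤ B i)
    (b : Fin N → ℤ) (hb : ∀ i, 0 ≤ b i ∧ b i ≤ B i) (e : ℤ)
    (hT₁ : ∑ i, θlo i ≤ clamp ((∑ i, b i) + e) 0 (∑ i, B i))
    (hT₂ : clamp ((∑ i, b i) + e) 0 (∑ i, B i) ≤ ∑ i, θhi i) :
    (∃ a : Fin N → ℤ, Feasible N B c e b a ∧ Rwd N r θlo θhi b a = 0) ∧
    ∀ a' : Fin N → ℤ, Feasible N B c e b a' → Rwd N r θlo θhi b a' ≤ 0 := by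
  refine ⟨?_, fun a' _ => ?_⟩
  · obtain ⟨x, hx, hsum⟩ :=
      exists_mem_box_sum_eq Finset.univ θlo θhi (fun i => (hθ i).2.1) _ hT₁ hT₂
    refine ⟨fun i => x i - b i, ⟨fun i => ?_, fun i => ?_, ?_⟩, ?_⟩
    · dsimp only
      have := hθ i
      have := hb i
      have := hx i
      have := hcB i
      rw [abs_le]
      omega
    · have := hθ i
      have := hx i
      dsimp only
      omega
    · have hlow : ∀ i, min (b i) (c i) = b i := fun i => min_eq_left ((hb i).2.trans (hcB i))
      have hup : ∀ i, min (B i - b i) (c i) = B i - b i := fun i => by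
        have := hb i
        have := hcB i
        omega
      simp only [hlow, hup, Finset.sum_sub_distrib, hsum]
      -- Translating by `∑ b i` commutes with clamping.
      unfold clamp
      omega
    · unfold Rwd
      rw [neg_eq_zero]
      refine Finset.sum_eq_zero fun i _ => ?_
      have hlo : ((θlo i - (b i + (x i - b i)) : ℤ) : ℝ) ≤ 0 := by
        have := hx i
        exact_mod_cast (by omega : θlo i - (b i + (x i - b i)) ≤ 0)
      have hhi : ((b i + (x i - b i) - θhi i : ℤ) : ℝ) ≤ 0 := by
        have := hx i
        exact_mod_cast (by omega : b i + (x i - b i) - θhi i ≤ 0)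
      rw [max_eq_right hlo, max_eq_right hhi, add_zero, mul_zero]
  · unfold Rwd
    exact neg_nonpos.mpr <| Finset.sum_nonneg fun i _ =>
      mul_nonneg (hr i) (add_nonneg (le_max_right _ _) (le_max_right _ _))
end

section
/- Policy-independence of the total-energy trajectory: suppose c i ≥ B i for all i and batteries are lossless. Let e : ℕ → ℤ be any net-generation sequence and let b : ℕ → (Fin N → ℤ) be any feasible trajectory, i.e., each b k is an occupancy vector and for each k the action b (k+1) - b k is feasible at b k for net generation e k. Then the totals T k = ∑ i, b k i satisfy 0 ≤ T k ≤ ∑ i, B i and T (k+1) = clamp (T k + e k) 0 (∑ i, B i) for all k. Consequently, any two feasible trajectories with the same initial total ∑ i, b 0 i have identical total-energy sequences. -/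
/-- A feasible trajectory: each `b k` is an occupancy vector and the (lossless)
action `b (k+1) - b k` taken at time `k` is feasible at `b k` for `e k`. -/
def FeasTraj (N : ℕ) (B c : Fin N → ℤ) (e : ℕ → ℤ) (b : ℕ → Fin N → ℤ) : Prop :=
  ∀ k, (∀ i, 0 ≤ b k i ∧ b k i ≤ B i) ∧
    Feasible N B c (e k) (b k) (b (k + 1) - b k)

/-- The one-step energy balance. Since `b i ≤ B i ≤ c i`, the ramp limits drop out of both bounds
of the clamp, which become `-∑ i, b i` and `∑ i, B i - ∑ i, b i`; translating by `∑ i, b i` turns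
them into `0` and `∑ i, B i`. -/
lemma FeasTraj.sum_succ {N : ℕ} {B c : Fin N → ℤ} (hcB : ∀ i, B i ≤ c i) {e : ℕ → ℤ}
    {b : ℕ → Fin N → ℤ} (h : FeasTraj N B c e b) (k : ℕ) :
    ∑ i, b (k + 1) i = clamp ((∑ i, b k i) + e k) 0 (∑ i, B i) := by
  obtain ⟨hb, -, -, hsum⟩ := h k
  have h1 : ∑ i, min (b k i) (c i) = ∑ i, b k i :=
    Finset.sum_congr rfl fun i _ => min_eq_left ((hb i).2.trans (hcB i))
  have h2 : ∑ i, min (B i - b k i) (c i) = ∑ i, B i - ∑ i, b k i := by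
    rw [← Finset.sum_sub_distrib]
    exact Finset.sum_congr rfl fun i _ => min_eq_left (by linarith [(hb i).1, hcB i])
  rw [h1, h2] at hsum
  simp only [Pi.sub_apply, Finset.sum_sub_distrib] at hsum
  unfold clamp at *
  omega

/-- Policy-independence of the total-energy trajectory when ramp constraints
never bind and batteries are lossless. -/
theorem total_energy_policy_independent (N : ℕ) (B : Fin N → ℤ) (hB : ∀ i, 0 ≤ B i)
    (c : Fin N → ℤ) (hc : ∀ i, 0 ≤ c i) (hcB : ∀ i, B i ≤ c i)
    (e : ℕ → ℤ) :
    (∀ b : ℕ → Fin N → ℤ, FeasTraj N B c e b →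
      ∀ k, (0 ≤ ∑ i, b k i ∧ ∑ i, b k i ≤ ∑ i, B i) ∧
        ∑ i, b (k + 1) i = clamp ((∑ i, b k i) + e k) 0 (∑ i, B i)) ∧
    (∀ b b' : ℕ → Fin N → ℤ, FeasTraj N B c e b → FeasTraj N B c e b' →
      ∑ i, b 0 i = ∑ i, b' 0 i → ∀ k, ∑ i, b k i = ∑ i, b' k i) := by
  refine ⟨fun b h k => ⟨⟨Finset.sum_nonneg fun i _ => ((h k).1 i).1,
    Finset.sum_le_sum fun i _ => ((h k).1 i).2⟩, h.sum_succ hcB k⟩, fun b b' h h' h0 k => ?_⟩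
  induction k with
  | zero => exact h0
  | succ k ih => rw [h.sum_succ hcB, h'.sum_succ hcB, ih]
end

section
/- Optimality of the greedy policy (Theorem 1, pathwise form): suppose batteries are lossless and ramp constraints are never binding (c i ≥ B i for all i), and let γ ∈ ℝ with 0 < γ < 1. Fix any net-generation sequence e : ℕ → ℤ. Let b : ℕ → (Fin N → ℤ) be any feasible trajectory and let b* : ℕ → (Fin N → ℤ) be a greedy feasible trajectory (i.e., at every step k, the action a* k = b* (k+1) - b* k attains the maximum of R (b* k) a' over all actions a' feasible at b* k for e k) with the same initial total, ∑ i, b 0 i = ∑ i, b* 0 i. Then ∑' k, γ^k * R (b k) (b (k+1) - b k) ≤ ∑' k, γ^k * R (b* k) (b* (k+1) - b* k). -/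
/-- An action `a` is feasible at occupancy `b` for net generation `e`
(lossless batteries, no binding ramp constraints). -/
def FeasNR (N : ℕ) (B : Fin N → ℤ) (e : ℤ) (b a : Fin N → ℤ) : Prop :=
  (∀ i, 0 ≤ b i + a i ∧ b i + a i ≤ B i) ∧
    ∑ i, a i = clamp e (-∑ i, b i) (∑ i, (B i - b i))

/-- A feasible trajectory for the net-generation sequence `e`. -/
def FeasTrajNR (N : ℕ) (B : Fin N → ℤ) (e : ℕ → ℤ) (b : ℕ → Fin N → ℤ) : Prop :=
  ∀ k, (∀ i, 0 ≤ b k i ∧ b k i ≤ B i) ∧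
    FeasNR N B (e k) (b k) (b (k + 1) - b k)

/-- Two occupancies with equal totals reach exactly the same occupancies: the action `x - b'` leads
from `b'` to `x` just as `x - b` does from `b`. -/
lemma FeasNR.of_sum_eq {N : ℕ} {B : Fin N → ℤ} {e : ℤ} {b b' x : Fin N → ℤ}
    (h : FeasNR N B e b (x - b)) (hs : ∑ i, b i = ∑ i, b' i) : FeasNR N B e b' (x - b') := by
  obtain ⟨h1, h2⟩ := h
  refine ⟨fun i => by simpa using h1 i, ?_⟩
  simp only [Pi.sub_apply, Finset.sum_sub_distrib] at h2 ⊢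
  rw [← hs]
  exact h2

lemma FeasTrajNR.sum_eq {N : ℕ} {B : Fin N → ℤ} {e : ℕ → ℤ} {b b' : ℕ → Fin N → ℤ}
    (hb : FeasTrajNR N B e b) (hb' : FeasTrajNR N B e b')
    (h0 : ∑ i, b 0 i = ∑ i, b' 0 i) (k : ℕ) : ∑ i, b k i = ∑ i, b' k i := by
  induction k with
  | zero => exact h0
  | succ k ih =>
    have h1 := (hb k).2.2
    have h2 := (hb' k).2.2
    simp only [Pi.sub_apply, Finset.sum_sub_distrib] at h1 h2
    rw [← ih] at h2
    linarith

lemma Rwd_sub_eq {N : ℕ} (r : Fin N → ℝ) (θlo θhi b b' x : Fin N → ℤ) :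
    Rwd N r θlo θhi b (x - b) = Rwd N r θlo θhi b' (x - b') := by
  simp [Rwd]

lemma abs_Rwd_le {N : ℕ} {B : Fin N → ℤ} {r : Fin N → ℝ} (hr : ∀ i, 0 ≤ r i)
    {θlo θhi : Fin N → ℤ} (hθ : ∀ i, 0 ≤ θlo i ∧ θlo i ≤ θhi i ∧ θhi i ≤ B i)
    {e : ℤ} {b a : Fin N → ℤ} (h : FeasNR N B e b a) :
    |Rwd N r θlo θhi b a| ≤ ∑ i, r i * (B i + B i) := by
  rw [Rwd, abs_neg, abs_of_nonneg (Finset.sum_nonneg fun i _ => mul_nonneg (hr i) (by positivity))]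
  refine Finset.sum_le_sum fun i _ => mul_le_mul_of_nonneg_left ?_ (hr i)
  have h1 := h.1 i
  have h2 := hθ i
  refine add_le_add (max_le ?_ ?_) (max_le ?_ ?_)
  · exact_mod_cast (by omega : θlo i - (b i + a i) ≤ B i)
  · exact_mod_cast (by omega : 0 ≤ B i)
  · exact_mod_cast (by omega : b i + a i - θhi i ≤ B i)
  · exact_mod_cast (by omega : 0 ≤ B i)

lemma FeasTrajNR.summable {N : ℕ} {B : Fin N → ℤ} {r : Fin N → ℝ} (hr : ∀ i, 0 ≤ r i)
    {θlo θhi : Fin N → ℤ} (hθ : ∀ i, 0 ≤ θlo i ∧ θlo i ≤ θhi i ∧ θhi i ≤ B i)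
    {γ : ℝ} (hγ₀ : 0 < γ) (hγ₁ : γ < 1) {e : ℕ → ℤ} {b : ℕ → Fin N → ℤ}
    (hb : FeasTrajNR N B e b) :
    Summable fun k => γ ^ k * Rwd N r θlo θhi (b k) (b (k + 1) - b k) := by
  refine Summable.of_norm_bounded
    ((summable_geometric_of_lt_one hγ₀.le hγ₁).mul_right (∑ i, r i * ((B i : ℝ) + B i)))
    fun k => ?_
  rw [Real.norm_eq_abs, abs_mul, abs_of_pos (pow_pos hγ₀ k)]
  exact mul_le_mul_of_nonneg_left (abs_Rwd_le hr hθ (hb k).2) (pow_pos hγ₀ k).le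

/-- Optimality of the greedy policy (pathwise form): a greedily-operated
trajectory accumulates at least as much discounted reward as any other feasible
trajectory with the same initial total stored energy. -/
theorem greedy_policy_optimal_pathwise (N : ℕ) (B : Fin N → ℤ) (hB : ∀ i, 0 ≤ B i)
    (r : Fin N → ℝ) (hr : ∀ i, 0 ≤ r i)
    (θlo θhi : Fin N → ℤ)
    (hθ : ∀ i, 0 ≤ θlo i ∧ θlo i ≤ θhi i ∧ θhi i ≤ B i)
    (γ : ℝ) (hγ₀ : 0 < γ) (hγ₁ : γ < 1)
    (e : ℕ → ℤ)
    (b bstar : ℕ → Fin N → ℤ)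
    (hb : FeasTrajNR N B e b) (hbstar : FeasTrajNR N B e bstar)
    (hgreedy : ∀ k, ∀ a' : Fin N → ℤ, FeasNR N B (e k) (bstar k) a' →
      Rwd N r θlo θhi (bstar k) a' ≤
        Rwd N r θlo θhi (bstar k) (bstar (k + 1) - bstar k))
    (hinit : ∑ i, b 0 i = ∑ i, bstar 0 i) :
    (∑' k, γ ^ k * Rwd N r θlo θhi (b k) (b (k + 1) - b k)) ≤
      ∑' k, γ ^ k * Rwd N r θlo θhi (bstar k) (bstar (k + 1) - bstar k) := by
  refine (hb.summable hr hθ hγ₀ hγ₁).tsum_le_tsum (fun k => ?_) (hbstar.summable hr hθ hγ₀ hγ₁)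
  refine mul_le_mul_of_nonneg_left ?_ (pow_pos hγ₀ k).le
  rw [Rwd_sub_eq r θlo θhi (b k) (bstar k)]
  exact hgreedy k _ ((hb k).2.of_sum_eq (hb.sum_eq hbstar hinit k))
end

section
/- Optimality of the greedy policy in expectation: let (Ω, μ) be a probability space, suppose batteries are lossless, c i ≥ B i for all i, and 0 < γ < 1. Let e : ℕ → Ω → ℤ be any stochastic net-generation process, and let b, b* : ℕ → Ω → (Fin N → ℤ) be processes such that each b k and b* k is measurable, ω ↦ R (b k ω) (b (k+1) ω - b k ω) and the corresponding map for b* are measurable for each k, and for μ-almost every ω: b(·)(ω) is a feasible trajectory for e(·)(ω), b*(·)(ω) is a greedy feasible trajectory for e(·)(ω) (its action at each step maximizes the instantaneous reward among feasible actions), and ∑ i, b 0 ω i = ∑ i, b* 0 ω i. Then ∫ (∑' k, γ^k * R (b k ω) (b (k+1) ω - b k ω)) dμ(ω) ≤ ∫ (∑' k, γ^k * R (b* k ω) (b* (k+1) ω - b* k ω)) dμ(ω). -/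
/-!
The reward of an action depends only on the occupancy it leads to, and the total stored energy
evolves autonomously: it moves by the clamped net generation, which involves the occupancy only
through its total. Hence two feasible trajectories driven by the same net generation and starting
from the same total energy have the same total at every time (`sum_eq_of_feasTraj`). Consequently
any occupancy reached by the competitor at time `k + 1` can also be reached in one step from the
greedy trajectory at time `k`, so greediness dominates the competitor's reward at every single
step (`rwd_le_of_greedy`). Since rewards lie in `[-C, 0]` along feasible trajectories, the
discounted sums converge and are bounded, and the termwise inequality passes to the sum and the
integral.
-/

open MeasureTheory

theorem sum_eq_of_feasTraj {N : ℕ} {B : Fin N → ℤ} {e : ℕ → ℤ} {b c : ℕ → Fin N → ℤ}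
    (hb : FeasTrajNR N B e b) (hc : FeasTrajNR N B e c)
    (h0 : ∑ i, b 0 i = ∑ i, c 0 i) (k : ℕ) : ∑ i, b k i = ∑ i, c k i := by
  induction k with
  | zero => exact h0
  | succ k ih =>
    have h1 := (hb k).2.2
    have h2 := (hc k).2.2
    simp only [Pi.sub_apply, Finset.sum_sub_distrib] at h1 h2
    rw [ih] at h1
    linarith

/-- The competitor's next occupancy is reachable in one step from the greedy occupancy, because the
two have equal total energy; the greedy action therefore does at least as well. -/
theorem rwd_le_of_greedy {N : ℕ} {B : Fin N → ℤ} {r : Fin N → ℝ} {θlo θhi : Fin N → ℤ}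
    {e : ℕ → ℤ} {b c : ℕ → Fin N → ℤ}
    (hb : FeasTrajNR N B e b) (hc : FeasTrajNR N B e c)
    (hg : ∀ k, ∀ a' : Fin N → ℤ, FeasNR N B (e k) (c k) a' →
      Rwd N r θlo θhi (c k) a' ≤ Rwd N r θlo θhi (c k) (c (k + 1) - c k))
    (h0 : ∑ i, b 0 i = ∑ i, c 0 i) (k : ℕ) :
    Rwd N r θlo θhi (b k) (b (k + 1) - b k) ≤ Rwd N r θlo θhi (c k) (c (k + 1) - c k) := by
  have hfeas : FeasNR N B (e k) (c k) (b (k + 1) - c k) := by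
    refine ⟨fun i => ?_, ?_⟩
    · simpa using (hb (k + 1)).1 i
    · rw [← (hc k).2.2]
      simp only [Pi.sub_apply, Finset.sum_sub_distrib]
      rw [sum_eq_of_feasTraj hb hc h0 (k + 1)]
  have h := hg k _ hfeas
  have heq : Rwd N r θlo θhi (c k) (b (k + 1) - c k)
      = Rwd N r θlo θhi (b k) (b (k + 1) - b k) := by
    simp [Rwd]
  rwa [heq] at h

theorem abs_rwd_le {N : ℕ} {B : Fin N → ℤ} {r : Fin N → ℝ} (hr : ∀ i, 0 ≤ r i)
    {θlo θhi : Fin N → ℤ} (hθ : ∀ i, 0 ≤ θlo i ∧ θlo i ≤ θhi i ∧ θhi i ≤ B i)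
    {b a : Fin N → ℤ} (h : ∀ i, 0 ≤ b i + a i ∧ b i + a i ≤ B i) :
    |Rwd N r θlo θhi b a| ≤ ∑ i, r i * ((B i : ℝ) + B i) := by
  rw [Rwd, abs_neg, abs_of_nonneg]
  · refine Finset.sum_le_sum fun i _ => mul_le_mul_of_nonneg_left ?_ (hr i)
    obtain ⟨h1, h2, h3⟩ := hθ i
    obtain ⟨h4, h5⟩ := h i
    refine add_le_add (max_le ?_ ?_) (max_le ?_ ?_) <;> norm_cast <;> omega
  · exact Finset.sum_nonneg fun i _ => mul_nonneg (hr i) (by positivity)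

theorem summable_discounted {γ C : ℝ} (hγ₀ : 0 < γ) (hγ₁ : γ < 1) {f : ℕ → ℝ}
    (hf : ∀ k, |f k| ≤ C) : Summable fun k => γ ^ k * f k := by
  refine Summable.of_norm_bounded
    ((summable_geometric_of_lt_one hγ₀.le hγ₁).mul_right C) fun k => ?_
  rw [Real.norm_eq_abs, abs_mul, abs_of_pos (pow_pos hγ₀ k)]
  exact mul_le_mul_of_nonneg_left (hf k) (pow_pos hγ₀ k).le

theorem integrable_discounted {Ω : Type*} [MeasurableSpace Ω] {μ : Measure Ω}
    [IsProbabilityMeasure μ] {γ C : ℝ} (hγ₀ : 0 < γ) (hγ₁ : γ < 1) {f : ℕ → Ω → ℝ}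
    (hm : ∀ k, Measurable (f k)) (hf : ∀ᵐ ω ∂μ, ∀ k, |f k ω| ≤ C) :
    Integrable (fun ω => ∑' k, γ ^ k * f k ω) μ := by
  -- The sum converges only almost surely, so measurability is that of an a.e. limit.
  have hmeas : AEMeasurable (fun ω => ∑' k, γ ^ k * f k ω) μ := by
    refine aemeasurable_of_tendsto_metrizable_ae Filter.atTop
      (f := fun n ω => ∑ k ∈ Finset.range n, γ ^ k * f k ω) (fun n => ?_) ?_
    · exact (Finset.measurable_fun_sum _ fun k _ => (hm k).const_mul _).aemeasurable
    · filter_upwards [hf] with ω hω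
      exact (summable_discounted hγ₀ hγ₁ hω).hasSum.tendsto_sum_nat
  refine Integrable.of_bound hmeas.aestronglyMeasurable (∑' k, γ ^ k * C) ?_
  filter_upwards [hf] with ω hω
  refine tsum_of_norm_bounded
    ((summable_geometric_of_lt_one hγ₀.le hγ₁).mul_right C).hasSum fun k => ?_
  rw [Real.norm_eq_abs, abs_mul, abs_of_pos (pow_pos hγ₀ k)]
  exact mul_le_mul_of_nonneg_left (hω k) (pow_pos hγ₀ k).le

/-- Optimality of the greedy policy in expectation: for any stochastic
net-generation process, the expected discounted reward of a greedily-operated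
trajectory dominates that of any feasible trajectory with (a.s.) the same
initial total stored energy. -/
theorem greedy_policy_optimal_in_expectation
    {Ω : Type*} [MeasurableSpace Ω] (μ : Measure Ω) [IsProbabilityMeasure μ]
    (N : ℕ) (B : Fin N → ℤ) (hB : ∀ i, 0 ≤ B i)
    (r : Fin N → ℝ) (hr : ∀ i, 0 ≤ r i)
    (θlo θhi : Fin N → ℤ)
    (hθ : ∀ i, 0 ≤ θlo i ∧ θlo i ≤ θhi i ∧ θhi i ≤ B i)
    (γ : ℝ) (hγ₀ : 0 < γ) (hγ₁ : γ < 1)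
    (e : ℕ → Ω → ℤ)
    (b bstar : ℕ → Ω → (Fin N → ℤ))
    (hmeas : ∀ k, Measurable (b k)) (hmeas' : ∀ k, Measurable (bstar k))
    (hRmeas : ∀ k, Measurable (fun ω =>
      Rwd N r θlo θhi (b k ω) (b (k + 1) ω - b k ω)))
    (hRmeas' : ∀ k, Measurable (fun ω =>
      Rwd N r θlo θhi (bstar k ω) (bstar (k + 1) ω - bstar k ω)))
    (hae : ∀ᵐ ω ∂μ,
      FeasTrajNR N B (fun k => e k ω) (fun k => b k ω) ∧
      FeasTrajNR N B (fun k => e k ω) (fun k => bstar k ω) ∧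
      (∀ k, ∀ a' : Fin N → ℤ, FeasNR N B (e k ω) (bstar k ω) a' →
        Rwd N r θlo θhi (bstar k ω) a' ≤
          Rwd N r θlo θhi (bstar k ω) (bstar (k + 1) ω - bstar k ω)) ∧
      ∑ i, b 0 ω i = ∑ i, bstar 0 ω i) :
    (∫ ω, (∑' k, γ ^ k * Rwd N r θlo θhi (b k ω) (b (k + 1) ω - b k ω)) ∂μ) ≤
      ∫ ω, (∑' k, γ ^ k *
        Rwd N r θlo θhi (bstar k ω) (bstar (k + 1) ω - bstar k ω)) ∂μ := by
  have hbd : ∀ {e : ℕ → ℤ} {c : ℕ → Fin N → ℤ}, FeasTrajNR N B e c → ∀ k,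
      |Rwd N r θlo θhi (c k) (c (k + 1) - c k)| ≤ ∑ i, r i * ((B i : ℝ) + B i) :=
    fun hc k => abs_rwd_le hr hθ (hc k).2.1
  refine integral_mono_ae
    (integrable_discounted hγ₀ hγ₁ hRmeas (hae.mono fun ω h => hbd h.1))
    (integrable_discounted hγ₀ hγ₁ hRmeas' (hae.mono fun ω h => hbd h.2.1)) ?_
  filter_upwards [hae] with ω ⟨h1, h2, h3, h4⟩
  exact Summable.tsum_le_tsum
    (fun k => mul_le_mul_of_nonneg_left (rwd_le_of_greedy h1 h2 h3 h4 k) (pow_pos hγ₀ k).le)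
    (summable_discounted hγ₀ hγ₁ (hbd h1)) (summable_discounted hγ₀ hγ₁ (hbd h2))
end

section
/- Closed form for the greedy reward with homogeneous cycling costs: suppose c i ≥ B i for all i and r i = ρ for all i with ρ ≥ 0. Then for every occupancy vector b and net generation e ∈ ℤ, with T = clamp ((∑ i, b i) + e) 0 (∑ i, B i), the maximum of R b a over feasible actions a at b equals -ρ * (max (((∑ i, θlo i - T) : ℤ) : ℝ) 0 + max (((T - ∑ i, θhi i) : ℤ) : ℝ) 0). -/
/-- Discrete intermediate value property: the coordinate sum of integer vectors in a box takes
every integer value between its extremes. -/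
theorem exists_between_sum_eq {ι : Type*} (s : Finset ι) (L U : ι → ℤ) (h : ∀ i, L i ≤ U i) :
    ∀ T : ℤ, ∑ i ∈ s, L i ≤ T → T ≤ ∑ i ∈ s, U i →
      ∃ x : ι → ℤ, (∀ i, L i ≤ x i ∧ x i ≤ U i) ∧ ∑ i ∈ s, x i = T := by
  classical
  induction s using Finset.induction_on with
  | empty =>
    intro T h1 h2
    simp only [Finset.sum_empty] at h1 h2
    exact ⟨L, fun i => ⟨le_rfl, h i⟩, by simp only [Finset.sum_empty]; omega⟩
  | insert j s hj ih =>
    intro T h1 h2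
    rw [Finset.sum_insert hj] at h1 h2
    have hs : ∑ i ∈ s, L i ≤ ∑ i ∈ s, U i := Finset.sum_le_sum fun i _ => h i
    have hjj := h j
    -- Coordinate `j` takes as much as it can while leaving at least `∑ L` for the others.
    obtain ⟨x, hx, hsum⟩ := ih (T - min (U j) (T - ∑ i ∈ s, L i)) (by omega) (by omega)
    refine ⟨Function.update x j (min (U j) (T - ∑ i ∈ s, L i)), fun i => ?_, ?_⟩
    · by_cases hij : i = j
      · subst hij
        rw [Function.update_self]
        omega
      · rw [Function.update_of_ne hij]
        exact hx i
    · rw [Finset.sum_insert hj, Function.update_self, Finset.sum_update_of_notMem hj, hsum]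
      omega

theorem posPart_sum_le {ι : Type*} (s : Finset ι) (f : ι → ℤ) :
    max (∑ i ∈ s, f i) 0 ≤ ∑ i ∈ s, max (f i) 0 :=
  max_le (Finset.sum_le_sum fun _ _ => le_max_left _ _)
    (Finset.sum_nonneg fun _ _ => le_max_right _ _)

/-- Both sums of positive parts collapse simultaneously for a suitable `x` with total `T`. -/
theorem exists_balanced {ι : Type*} [Fintype ι] (B lo hi : ι → ℤ)
    (hθ : ∀ i, 0 ≤ lo i ∧ lo i ≤ hi i ∧ hi i ≤ B i) (T : ℤ) (h0 : 0 ≤ T) (hT : T ≤ ∑ i, B i) :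
    ∃ x : ι → ℤ, (∀ i, 0 ≤ x i ∧ x i ≤ B i) ∧ ∑ i, x i = T ∧
      ∑ i, max (lo i - x i) 0 = max (∑ i, lo i - T) 0 ∧
      ∑ i, max (x i - hi i) 0 = max (T - ∑ i, hi i) 0 := by
  have hlh : ∑ i, lo i ≤ ∑ i, hi i := Finset.sum_le_sum fun i _ => (hθ i).2.1
  rcases le_total T (∑ i, lo i) with h1 | h1
  · obtain ⟨x, hx, rfl⟩ := exists_between_sum_eq Finset.univ (fun _ => 0) lo
      (fun i => (hθ i).1) T (by simpa using h0) h1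
    refine ⟨x, fun i => ?_, rfl, ?_, ?_⟩
    · have := hx i; have := hθ i; omega
    · rw [max_eq_left (by omega), ← Finset.sum_sub_distrib]
      refine Finset.sum_congr rfl fun i _ => ?_
      have := hx i; omega
    · rw [max_eq_right (by omega)]
      refine Finset.sum_eq_zero fun i _ => ?_
      have := hx i; have := hθ i; omega
  rcases le_total T (∑ i, hi i) with h2 | h2
  · obtain ⟨x, hx, rfl⟩ := exists_between_sum_eq Finset.univ lo hi (fun i => (hθ i).2.1) T h1 h2
    refine ⟨x, fun i => ?_, rfl, ?_, ?_⟩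
    · have := hx i; have := hθ i; omega
    · rw [max_eq_right (by omega)]
      refine Finset.sum_eq_zero fun i _ => ?_
      have := hx i; omega
    · rw [max_eq_right (by omega)]
      refine Finset.sum_eq_zero fun i _ => ?_
      have := hx i; omega
  · obtain ⟨x, hx, rfl⟩ := exists_between_sum_eq Finset.univ hi B (fun i => (hθ i).2.2) T h2 hT
    refine ⟨x, fun i => ?_, rfl, ?_, ?_⟩
    · have := hx i; have := hθ i; omega
    · rw [max_eq_right (by omega)]
      refine Finset.sum_eq_zero fun i _ => ?_
      have := hx i; have := hθ i; omega
    · rw [max_eq_left (by omega), ← Finset.sum_sub_distrib]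
      refine Finset.sum_congr rfl fun i _ => ?_
      have := hx i; omega

theorem clamp_shift (s e M : ℤ) : s + clamp e (-s) (M - s) = clamp (s + e) 0 M := by
  unfold clamp
  omega

/-- With a common coefficient `ρ`, the reward is `-ρ` times an integer cost. -/
theorem Rwd_homogeneous (N : ℕ) (ρ : ℝ) (r : Fin N → ℝ) (hr : ∀ i, r i = ρ)
    (θlo θhi b a : Fin N → ℤ) :
    Rwd N r θlo θhi b a = -ρ * ((∑ i, max (θlo i - (b i + a i)) 0 +
      ∑ i, max ((b i + a i) - θhi i) 0 : ℤ) : ℝ) := by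
  unfold Rwd
  simp only [hr]
  rw [← Finset.mul_sum, Finset.sum_add_distrib]
  push_cast
  ring

/-- Closed form for the greedy reward with homogeneous cycling costs: with
`T` the clamped updated total, the maximal reward over feasible actions equals
`-ρ * ((∑θlo - T)₊ + (T - ∑θhi)₊)`. -/
theorem greedy_reward_closed_form (N : ℕ) (B : Fin N → ℤ) (hB : ∀ i, 0 ≤ B i)
    (c : Fin N → ℤ) (hc : ∀ i, 0 ≤ c i) (hcB : ∀ i, B i ≤ c i)
    (ρ : ℝ) (hρ : 0 ≤ ρ) (r : Fin N → ℝ) (hr : ∀ i, r i = ρ)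
    (θlo θhi : Fin N → ℤ)
    (hθ : ∀ i, 0 ≤ θlo i ∧ θlo i ≤ θhi i ∧ θhi i ≤ B i)
    (b : Fin N → ℤ) (hb : ∀ i, 0 ≤ b i ∧ b i ≤ B i) (e : ℤ) :
    IsGreatest
      {x : ℝ | ∃ a : Fin N → ℤ, FeasNR N B e b a ∧ x = Rwd N r θlo θhi b a}
      (-ρ * (max (((∑ i, θlo i - clamp ((∑ i, b i) + e) 0 (∑ i, B i) : ℤ) : ℝ)) 0 +
             max (((clamp ((∑ i, b i) + e) 0 (∑ i, B i) - ∑ i, θhi i : ℤ) : ℝ)) 0)) := by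
  set T := clamp ((∑ i, b i) + e) 0 (∑ i, B i) with hTdef
  have hM : 0 ≤ ∑ i, B i := Finset.sum_nonneg fun i _ => hB i
  have hT : 0 ≤ T ∧ T ≤ ∑ i, B i := by
    rw [hTdef]; unfold clamp; omega
  have hshift : ∑ i, b i + clamp e (-∑ i, b i) (∑ i, (B i - b i)) = T := by
    rw [Finset.sum_sub_distrib, clamp_shift]
  constructor
  · obtain ⟨x, hx, hsum, hlo, hhi⟩ := exists_balanced B θlo θhi hθ T hT.1 hT.2
    refine ⟨fun i => x i - b i, ⟨fun i => by simpa using hx i, ?_⟩, ?_⟩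
    · rw [Finset.sum_sub_distrib, hsum]
      omega
    · rw [Rwd_homogeneous N ρ r hr]
      simp only [add_sub_cancel, hlo, hhi]
      push_cast
      rfl
  · rintro _ ⟨a, ⟨-, hsum⟩, rfl⟩
    have htot : ∑ i, (b i + a i) = T := by rw [Finset.sum_add_distrib, hsum, hshift]
    have hlo := posPart_sum_le Finset.univ fun i => θlo i - (b i + a i)
    have hhi := posPart_sum_le Finset.univ fun i => (b i + a i) - θhi i
    rw [Finset.sum_sub_distrib, htot] at hlo hhi
    have hcost : ((max (∑ i, θlo i - T) 0 + max (T - ∑ i, θhi i) 0 : ℤ) : ℝ) ≤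
        ((∑ i, max (θlo i - (b i + a i)) 0 + ∑ i, max ((b i + a i) - θhi i) 0 : ℤ) : ℝ) :=
      Int.cast_le.mpr (add_le_add hlo hhi)
    rw [Rwd_homogeneous N ρ r hr]
    refine (mul_le_mul_of_nonpos_left hcost (neg_nonpos.mpr hρ)).trans_eq ?_
    push_cast
    rfl
end
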